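/- Let n jobs be given, where job j has processing time p_j ∈ ℕ, weight w_j ∈ ℕ, release date r_j ∈ ℕ and due date d_j ∈ ℕ. For J ⊆ {1,…,n}, t ∈ ℕ∞ and ε ∈ ℤ, define OPT[J,t,ε] ∈ ℕ∞ as the minimum makespan over all schedules of J starting at time t whose weighted number of late jobs ∑_{j∈J} w_j·𝟙[C_j > d_j] equals ε (∞ if t = ∞, if ε < 0, or if no such schedule exists). Then for every J ⊆ {1,…,n} of even cardinality |J| ≥ 2, every t ∈ ℕ and every ε ∈ ℤ, OPT[J,t,ε] = min over all ε' ∈ ℤ with 0 ≤ ε' ≤ ε and all X ⊆ J with |X| = |J|/2 of OPT[X, OPT[J∖X, t, ε − ε'], ε']. -/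

import Mathlib

/-- `ValidFrom p r t s` : the list `s` of pairs (job, completion time) is a valid
schedule starting at time `t` : the first job `j` satisfies
`C_j ≥ max t (r j) + p j`, and each further job `j` satisfies
`C_j ≥ max C_prev (r j) + p j` (idle time is allowed). -/
def ValidFrom {n : ℕ} (p r : Fin n → ℕ) : ℕ → List (Fin n × ℕ) → Prop
  | _, [] => True
  | t, (j, c) :: s => max t (r j) + p j ≤ c ∧ ValidFrom p r c s

/-- The makespan of a schedule : the completion time of its last job. -/
def makespan {n : ℕ} (s : List (Fin n × ℕ)) : ℕ :=
  ((s.map Prod.snd).getLast?).getD 0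

/-- The weighted number of late jobs `∑_j w j * 𝟙[C_j > d j]` of a schedule. -/
def lateWeight {n : ℕ} (w d : Fin n → ℕ) (s : List (Fin n × ℕ)) : ℕ :=
  (s.map fun jc => if d jc.1 < jc.2 then w jc.1 else 0).sum

/-- `OPT p w r d J t ε` : minimum makespan over all schedules of the jobs of `J`
starting at time `t` whose weighted number of late jobs equals `ε`
(`⊤` if `t = ⊤`, if `ε < 0`, or if no such schedule exists). -/
noncomputable def OPT {n : ℕ} (p w r d : Fin n → ℕ) (J : Finset (Fin n))
    (t : ℕ∞) (ε : ℤ) : ℕ∞ :=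
  sInf { v : ℕ∞ | ∃ t₀ : ℕ, (t₀ : ℕ∞) = t ∧ ∃ s : List (Fin n × ℕ),
    (s.map Prod.fst).Nodup ∧ (s.map Prod.fst).toFinset = J ∧
    ValidFrom p r t₀ s ∧ (lateWeight w d s : ℤ) = ε ∧ v = (makespan s : ℕ∞) }

/-!
Cutting a schedule of `J` before its last `m` jobs, which form a set `X`, leaves a schedule of
`J \ X` followed by a schedule of `X` that starts at the makespan of the first part. The weights of
late jobs add up over the two parts, and starting `X` earlier never hurts because idle time is
allowed, so the first part may be replaced by an optimal one. Conversely, concatenating an optimal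
schedule of `J \ X` with an optimal schedule of `X` started at its makespan schedules `J`.
-/

section Schedule

variable {n : ℕ} {p w r d : Fin n → ℕ} {J J₁ J₂ : Finset (Fin n)} {s s₁ s₂ : List (Fin n × ℕ)}

theorem ValidFrom.anti_start {t t' : ℕ} (h : t' ≤ t) (hs : ValidFrom p r t s) :
    ValidFrom p r t' s := by
  cases s with
  | nil => trivial
  | cons a s => exact ⟨(Nat.add_le_add_right (max_le_max_right _ h) _).trans hs.1, hs.2⟩

theorem makespan_append_of_ne_nil (s₁ : List (Fin n × ℕ)) (h : s₂ ≠ []) :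
    makespan (s₁ ++ s₂) = makespan s₂ := by
  obtain ⟨s, a, rfl⟩ := (List.eq_nil_or_concat' s₂).resolve_left h
  simp [makespan, ← List.append_assoc]

-- The empty schedule has makespan `0`, not its starting time.
theorem validFrom_append {t : ℕ} (h : s₁ ≠ []) :
    ValidFrom p r t (s₁ ++ s₂) ↔ ValidFrom p r t s₁ ∧ ValidFrom p r (makespan s₁) s₂ := by
  induction s₁ generalizing t with
  | nil => contradiction
  | cons a s ih =>
    rcases eq_or_ne s [] with rfl | hs
    · simp [ValidFrom, makespan]
    · have hmakespan : makespan (a :: s) = makespan s := makespan_append_of_ne_nil [a] hs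
      simp [ValidFrom, hmakespan, ih hs, and_assoc]

theorem lateWeight_append (w d : Fin n → ℕ) (s₁ s₂ : List (Fin n × ℕ)) :
    lateWeight w d (s₁ ++ s₂) = lateWeight w d s₁ + lateWeight w d s₂ := by
  simp [lateWeight]

/-- `IsSchedule p r J t s`: the list `s` of pairs (job, completion time) is a schedule of the set
`J` of jobs starting at time `t`. These are the schedules over which `OPT` minimizes the
makespan. -/
structure IsSchedule (p r : Fin n → ℕ) (J : Finset (Fin n)) (t : ℕ) (s : List (Fin n × ℕ)) :
    Prop where
  nodup : (s.map Prod.fst).Nodup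
  toFinset_eq : (s.map Prod.fst).toFinset = J
  validFrom : ValidFrom p r t s

namespace IsSchedule

variable {t : ℕ}

theorem length_eq (hs : IsSchedule p r J t s) : s.length = J.card := by
  rw [← hs.toFinset_eq, List.toFinset_card_of_nodup hs.nodup, List.length_map]

theorem ne_nil (hs : IsSchedule p r J t s) (hJ : J.Nonempty) : s ≠ [] :=
  List.ne_nil_of_length_pos (hs.length_eq ▸ hJ.card_pos)

theorem anti_start {t' : ℕ} (h : t' ≤ t) (hs : IsSchedule p r J t s) : IsSchedule p r J t' s :=
  ⟨hs.nodup, hs.toFinset_eq, hs.validFrom.anti_start h⟩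

theorem append (hs₁ : IsSchedule p r J₁ t s₁) (hs₂ : IsSchedule p r J₂ (makespan s₁) s₂)
    (hdisj : Disjoint J₁ J₂) (hne : s₁ ≠ []) : IsSchedule p r (J₁ ∪ J₂) t (s₁ ++ s₂) where
  nodup := by
    rw [← hs₁.toFinset_eq, ← hs₂.toFinset_eq, List.disjoint_toFinset_iff_disjoint] at hdisj
    rw [List.map_append]
    exact hs₁.nodup.append hs₂.nodup hdisj
  toFinset_eq := by rw [List.map_append, List.toFinset_append, hs₁.toFinset_eq, hs₂.toFinset_eq]
  validFrom := (validFrom_append hne).2 ⟨hs₁.validFrom, hs₂.validFrom⟩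

theorem of_append_left (hs : IsSchedule p r J t (s₁ ++ s₂)) (hne : s₁ ≠ []) :
    IsSchedule p r (J \ (s₂.map Prod.fst).toFinset) t s₁ := by
  obtain ⟨hnodup, rfl, hvalid⟩ := hs
  rw [List.map_append, List.nodup_append'] at hnodup
  refine ⟨hnodup.1, ?_, ((validFrom_append hne).1 hvalid).1⟩
  rw [List.map_append, List.toFinset_append, Finset.union_sdiff_cancel_right
    (List.disjoint_toFinset_iff_disjoint.2 hnodup.2.2)]

theorem of_append_right (hs : IsSchedule p r J t (s₁ ++ s₂)) (hne : s₁ ≠ []) :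
    IsSchedule p r (s₂.map Prod.fst).toFinset (makespan s₁) s₂ where
  nodup := hs.nodup.sublist ((List.sublist_append_right s₁ s₂).map Prod.fst)
  toFinset_eq := rfl
  validFrom := ((validFrom_append hne).1 hs.validFrom).2

theorem exists_append_of_lt_card (hs : IsSchedule p r J t s) {m : ℕ} (hm : m < J.card) :
    ∃ X ⊆ J, X.card = m ∧ ∃ s₁ s₂, s = s₁ ++ s₂ ∧
      IsSchedule p r (J \ X) t s₁ ∧ IsSchedule p r X (makespan s₁) s₂ := by
  obtain ⟨s₁, s₂, rfl, hlen⟩ : ∃ s₁ s₂, s = s₁ ++ s₂ ∧ s₂.length = m :=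
    ⟨s.take (s.length - m), s.drop (s.length - m), (List.take_append_drop _ _).symm, by
      rw [List.length_drop, hs.length_eq]; omega⟩
  have hne : s₁ ≠ [] := by
    rintro rfl
    exact hm.ne (hlen.symm.trans hs.length_eq)
  have hs₂ := hs.of_append_right hne
  refine ⟨_, ?_, hs₂.length_eq.symm.trans hlen, s₁, s₂, rfl, hs.of_append_left hne, hs₂⟩
  rw [← hs.toFinset_eq, List.map_append, List.toFinset_append]
  exact Finset.subset_union_right

end IsSchedule

theorem OPT_le_makespan {t : ℕ} (hs : IsSchedule p r J t s) :
    OPT p w r d J t (lateWeight w d s) ≤ makespan s :=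
  sInf_le ⟨t, rfl, s, hs.nodup, hs.toFinset_eq, hs.validFrom, rfl, rfl⟩

theorem le_OPT {t v : ℕ∞} {ε : ℤ}
    (h : ∀ t₀ : ℕ, (t₀ : ℕ∞) = t → ∀ s, IsSchedule p r J t₀ s → (lateWeight w d s : ℤ) = ε →
      v ≤ makespan s) : v ≤ OPT p w r d J t ε := by
  refine le_sInf ?_
  rintro _ ⟨t₀, ht₀, s, hnodup, hJ, hvalid, hε, rfl⟩
  exact h t₀ ht₀ s ⟨hnodup, hJ, hvalid⟩ hε

theorem exists_isSchedule_of_OPT_eq_natCast {t : ℕ∞} {ε : ℤ} {T : ℕ}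
    (h : OPT p w r d J t ε = T) :
    ∃ t₀ : ℕ, (t₀ : ℕ∞) = t ∧ ∃ s, IsSchedule p r J t₀ s ∧
      (lateWeight w d s : ℤ) = ε ∧ makespan s = T := by
  rw [OPT] at h
  obtain ⟨v, hv, -⟩ := sInf_lt_iff.1 (h.trans_lt (ENat.natCast_lt_top T))
  obtain ⟨t₀, ht₀, s, hnodup, hJ, hvalid, hε, hT⟩ := csInf_mem ⟨v, hv⟩
  exact ⟨t₀, ht₀, s, ⟨hnodup, hJ, hvalid⟩, hε, by exact_mod_cast hT.symm.trans h⟩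

theorem OPT_mono_start {t t' : ℕ∞} (h : t' ≤ t) (ε : ℤ) :
    OPT p w r d J t' ε ≤ OPT p w r d J t ε := by
  refine le_OPT ?_
  rintro t rfl s hs rfl
  lift t' to ℕ using ne_top_of_le_ne_top (ENat.natCast_ne_top t) h
  exact OPT_le_makespan (hs.anti_start (by exact_mod_cast h))

theorem OPT_union_le_OPT_OPT (hdisj : Disjoint J₁ J₂) (hJ₁ : J₁.Nonempty) (hJ₂ : J₂.Nonempty)
    (t : ℕ∞) (ε₁ ε₂ : ℤ) :
    OPT p w r d (J₁ ∪ J₂) t (ε₁ + ε₂) ≤ OPT p w r d J₂ (OPT p w r d J₁ t ε₁) ε₂ := by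
  refine le_OPT ?_
  rintro T hT s₂ hs₂ rfl
  obtain ⟨t, rfl, s₁, hs₁, rfl, rfl⟩ := exists_isSchedule_of_OPT_eq_natCast hT.symm
  have happend := hs₁.append hs₂ hdisj (hs₁.ne_nil hJ₁)
  rw [← makespan_append_of_ne_nil s₁ (hs₂.ne_nil hJ₂), ← Nat.cast_add, ← lateWeight_append]
  exact OPT_le_makespan happend

theorem OPT_OPT_le_makespan {t : ℕ} (hs₁ : IsSchedule p r J₁ t s₁)
    (hs₂ : IsSchedule p r J₂ (makespan s₁) s₂) :
    OPT p w r d J₂ (OPT p w r d J₁ t (lateWeight w d s₁)) (lateWeight w d s₂) ≤ makespan s₂ :=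
  (OPT_mono_start (OPT_le_makespan hs₁) _).trans (OPT_le_makespan hs₂)

end Schedule

theorem stmt7_general {n : ℕ} (p w r d : Fin n → ℕ) (J : Finset (Fin n)) {m : ℕ}
    (hm : 0 < m) (hmJ : m < J.card) (t : ℕ∞) (ε : ℤ) :
    OPT p w r d J t ε =
      ⨅ (ε' : ℤ) (_ : 0 ≤ ε' ∧ ε' ≤ ε) (X : Finset (Fin n)) (_ : X ⊆ J ∧ X.card = m),
        OPT p w r d X (OPT p w r d (J \ X) t (ε - ε')) ε' := by
  refine le_antisymm (le_iInf₂ fun ε' _ => le_iInf₂ fun X hX => ?_) (le_OPT ?_)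
  · obtain ⟨hXJ, rfl⟩ := hX
    have hrest : (J \ X).Nonempty := Finset.sdiff_nonempty_of_card_lt_card hmJ
    simpa only [Finset.sdiff_union_of_subset hXJ, sub_add_cancel] using
      OPT_union_le_OPT_OPT Finset.sdiff_disjoint hrest (Finset.card_pos.1 hm) t (ε - ε') ε'
  · rintro t rfl s hs rfl
    obtain ⟨X, hXJ, rfl, s₁, s₂, rfl, hs₁, hs₂⟩ := hs.exists_append_of_lt_card hmJ
    have hε := lateWeight_append w d s₁ s₂
    refine iInf₂_le_of_le (lateWeight w d s₂ : ℤ) ⟨by omega, by omega⟩ <|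
      iInf₂_le_of_le X ⟨hXJ, rfl⟩ ?_
    rw [hε, Nat.cast_add, add_sub_cancel_right,
      makespan_append_of_ne_nil s₁ (hs₂.ne_nil (Finset.card_pos.1 hm))]
    exact OPT_OPT_le_makespan hs₁ hs₂

theorem stmt7 {n : ℕ} (p w r d : Fin n → ℕ) (J : Finset (Fin n))
    (hJcard : 2 ≤ J.card) (hJeven : Even J.card) (t : ℕ) (ε : ℤ) :
    OPT p w r d J (t : ℕ∞) ε =
      ⨅ (ε' : ℤ) (_ : 0 ≤ ε' ∧ ε' ≤ ε) (X : Finset (Fin n))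
          (_ : X ⊆ J ∧ X.card = J.card / 2),
        OPT p w r d X (OPT p w r d (J \ X) (t : ℕ∞) (ε - ε')) ε' :=
  stmt7_general p w r d J (by omega) (by omega) t ε
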